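/- arXiv:math/0608507 — 2 statements merged into one kernel-verified Lean document; each statement's English description precedes it below -/
import Mathlib

section
/- Let n ≥ 2, let Ω ⊂ ℝⁿ be a bounded open set, let 1 < p < n, and let V be a finite-dimensional real inner product space. Then there exists a constant κ > 0, depending only on Ω, n and p (and in particular not on the connection form), such that for every continuously differentiable function f : Ω → V with compact support contained in Ω and every metric-compatible connection 1-form A on Ω, one has (∫_Ω |f(x)|^p dx)^{1/p} ≤ κ · (∫_Ω |∇_A f(x)|^p dx)^{1/p}. -/
open Set MeasureTheory
open scoped RealInnerProductSpace

/-!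
The inequality follows from one integration by parts in a single coordinate direction `e`.
Since `p > 1`, the function `‖f‖ ^ p` is `C¹`, and skew-adjointness of `A` gives `⟪f, A f⟫ = 0`, so
`∂ₑ ‖f‖ ^ p = p ‖f‖ ^ (p - 2) ⟪f, ∂ₑ f + Aₑ f⟫`, which is at most `p ‖f‖ ^ (p - 1) |∇_A f|` in
absolute value (`abs_fderiv_norm_rpow_le_of_inner_eq_zero`). If `|xₑ| ≤ R` on `Ω`, then
`∫ ‖f‖ ^ p = -∫ xₑ ∂ₑ ‖f‖ ^ p ≤ R p ∫ |∇_A f| ‖f‖ ^ (p - 1)`, and Hölder's inequality bounds the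
right side by `R p ‖∇_A f‖_p ‖f‖_p ^ (p - 1)`. Dividing by `‖f‖_p ^ (p - 1)` gives `κ = R p`.
-/

/-- A Kato-type inequality: the derivative of `‖f‖ ^ p` is unchanged when a vector `a`
orthogonal to `f x` is added to the derivative of `f`. -/
lemma abs_fderiv_norm_rpow_le_of_inner_eq_zero {E V : Type*} [NormedAddCommGroup E]
    [NormedSpace ℝ E] [NormedAddCommGroup V] [InnerProductSpace ℝ V] {f : E → V}
    (hf : Differentiable ℝ f) {p : ℝ} (hp : 1 < p) (x e : E) (a : V) (ha : ⟪f x, a⟫ = 0) :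
    |fderiv ℝ (fun x ↦ ‖f x‖ ^ p) x e| ≤ p * (‖fderiv ℝ f x e + a‖ * ‖f x‖ ^ (p - 1)) := by
  have h1 : fderiv ℝ (fun x ↦ ‖f x‖ ^ p) x e
      = p * ‖f x‖ ^ (p - 2) * ⟪f x, fderiv ℝ f x e + a⟫ := by
    rw [hf.fderiv_norm_rpow hp, inner_add_right, ha, add_zero]
    simp
  have h2 : ‖f x‖ ^ (p - 1) = ‖f x‖ ^ (p - 2) * ‖f x‖ := by
    rw [← Real.rpow_add_one' (norm_nonneg _) (by linarith)]
    ring_nf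
  rw [h1, abs_mul, abs_of_nonneg (by positivity), h2]
  calc p * ‖f x‖ ^ (p - 2) * |⟪f x, fderiv ℝ f x e + a⟫|
      ≤ p * ‖f x‖ ^ (p - 2) * (‖f x‖ * ‖fderiv ℝ f x e + a‖) := by
        gcongr
        exact abs_real_inner_le_norm _ _
    _ = _ := by ring

/-- A coefficient that is continuous only on an open set `Ω` becomes globally continuous after
being applied to a function supported in `Ω`. -/
lemma continuous_clm_apply_of_tsupport_subset {E V : Type*} [TopologicalSpace E]
    [NormedAddCommGroup V] [NormedSpace ℝ V] {Ω : Set E} (hΩ : IsOpen Ω) {f : E → V}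
    (hf : Continuous f) (hs : tsupport f ⊆ Ω) {A : E → V →L[ℝ] V} (hA : ContinuousOn A Ω) :
    Continuous fun x ↦ A x (f x) := by
  rw [continuous_iff_continuousAt]
  intro x
  by_cases hx : x ∈ tsupport f
  · exact (hA.continuousAt (hΩ.mem_nhds (hs hx))).clm_apply hf.continuousAt
  · have h : (fun y ↦ A y (f y)) =ᶠ[nhds x] fun _ ↦ 0 := by
      filter_upwards [notMem_tsupport_iff_eventuallyEq.mp hx] with y hy
      simp [hy]
    exact continuousAt_const.congr h.symm

/-- **Sobolev–Poincaré inequality with connection.** For a bounded open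
`Ω ⊂ ℝⁿ` (`n ≥ 2`) and `1 < p < n`, there is a constant `κ > 0`, depending only on `Ω`, `n`
and `p` (in particular not on the connection), such that for every `C¹` function
`f : Ω → V` with compact support in `Ω` and every continuous metric-compatible (i.e.
skew-adjoint-valued) connection 1-form `A` on `Ω`,
`‖f‖_{L^p} ≤ κ ‖∇_A f‖_{L^p}`. -/
theorem sobolev_poincare_with_connection
    (n : ℕ) (hn : 2 ≤ n)
    (Ω : Set (Fin n → ℝ)) (hΩopen : IsOpen Ω) (hΩbdd : Bornology.IsBounded Ω)
    (p : ℝ) (hp1 : 1 < p) (hpn : p < n)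
    (V : Type*) [NormedAddCommGroup V] [InnerProductSpace ℝ V] [FiniteDimensional ℝ V] :
    ∃ κ : ℝ, 0 < κ ∧
      ∀ (f : (Fin n → ℝ) → V), ContDiff ℝ 1 f → HasCompactSupport f → tsupport f ⊆ Ω →
        ∀ (A : Fin n → (Fin n → ℝ) → (V →L[ℝ] V)),
          (∀ i, ContinuousOn (A i) Ω) →
          (∀ i, ∀ x ∈ Ω, ∀ v w : V, ⟪A i x v, w⟫ = -⟪v, A i x w⟫) →
          (∫ x in Ω, ‖f x‖ ^ p) ^ (1 / p)
            ≤ κ * (∫ x in Ω,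
                (∑ i, ‖fderiv ℝ f x (Pi.single i 1) + A i x (f x)‖ ^ 2) ^ (p / 2)) ^ (1 / p) := by
  obtain ⟨R, hR0, hR⟩ := hΩbdd.exists_pos_norm_le
  refine ⟨R * p, by positivity, ?_⟩
  intro f hf hfc hfs A hAc hA
  have hp0 : 0 < p := by linarith
  let e : Fin n := ⟨0, by omega⟩
  have hzero : ∀ x, x ∉ Ω → f x = 0 := fun x hx ↦
    image_eq_zero_of_notMem_tsupport fun h ↦ hx (hfs h)
  have hdiff : Differentiable ℝ f := hf.differentiable one_ne_zero
  set D : Fin n → (Fin n → ℝ) → V := fun i x ↦ fderiv ℝ f x (Pi.single i 1) + A i x (f x)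
    with hD
  have hDc : ∀ i, Continuous (D i) := fun i ↦
    ((hf.continuous_fderiv one_ne_zero).clm_apply continuous_const).add
      (continuous_clm_apply_of_tsupport_subset hΩopen hf.continuous hfs (hAc i))
  have hDzero : ∀ x, x ∉ tsupport f → ∀ i, D i x = 0 := by
    intro x hx i
    have h1 : fderiv ℝ f x = 0 :=
      image_eq_zero_of_notMem_tsupport fun h ↦ hx (tsupport_fderiv_subset ℝ h)
    simp [hD, h1, image_eq_zero_of_notMem_tsupport hx]
  -- `G` is the pointwise norm of the covariant derivative.
  set G : (Fin n → ℝ) → ℝ := fun x ↦ (∑ i, ‖D i x‖ ^ 2) ^ (1 / 2 : ℝ) with hG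
  have hG0 : ∀ x, 0 ≤ G x := fun x ↦ by positivity
  have hGc : Continuous G :=
    (continuous_finsetSum _ fun i _ ↦ (hDc i).norm.pow 2).rpow_const fun _ ↦ Or.inr (by norm_num)
  have hGs : HasCompactSupport G := HasCompactSupport.intro hfc fun x hx ↦ by
    simp [hG, hDzero x hx]
  have hDG : ∀ i x, ‖D i x‖ ≤ G x := by
    intro i x
    rw [hG]
    simp only
    rw [← Real.sqrt_eq_rpow]
    exact Real.le_sqrt_of_sq_le
      (Finset.single_le_sum (f := fun i ↦ ‖D i x‖ ^ 2) (fun _ _ ↦ by positivity)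
        (Finset.mem_univ i))
  have hGp : ∀ x, (∑ i, ‖D i x‖ ^ 2) ^ (p / 2) = G x ^ p := by
    intro x
    rw [hG]
    simp only
    rw [← Real.rpow_mul (by positivity)]
    congr 1
    ring
  have hI1 : ∫ x in Ω, ‖f x‖ ^ p = ∫ x, ‖f x‖ ^ p :=
    setIntegral_eq_integral_of_forall_compl_eq_zero fun x hx ↦ by
      simp [hzero x hx, hp0.ne']
  have hI2 : ∫ x in Ω, (∑ i, ‖D i x‖ ^ 2) ^ (p / 2) = ∫ x, G x ^ p := by
    simp_rw [hGp]
    refine setIntegral_eq_integral_of_forall_compl_eq_zero fun x hx ↦ ?_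
    have : G x = 0 := by simp [hG, hDzero x fun h ↦ hx (hfs h)]
    simp [this, hp0.ne']
  rw [hI1, hI2]
  set g : (Fin n → ℝ) → ℝ := fun x ↦ ‖f x‖ ^ p with hg
  have hgC : ContDiff ℝ 1 g := hf.norm_rpow hp1
  have hgs : HasCompactSupport g := HasCompactSupport.intro hfc fun x hx ↦ by
    simp [hg, image_eq_zero_of_notMem_tsupport hx, hp0.ne']
  have hg'c : Continuous fun x ↦ fderiv ℝ g x (Pi.single e 1) :=
    (hgC.continuous_fderiv one_ne_zero).clm_apply continuous_const
  have hg's : HasCompactSupport fun x ↦ fderiv ℝ g x (Pi.single e 1) := hgs.fderiv_apply ℝ _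
  have hwc : Continuous fun x ↦ ‖f x‖ ^ (p - 1) :=
    hf.continuous.norm.rpow_const fun _ ↦ Or.inr (by linarith)
  have hws : HasCompactSupport fun x ↦ ‖f x‖ ^ (p - 1) :=
    HasCompactSupport.intro hfc fun x hx ↦ by
      simp [image_eq_zero_of_notMem_tsupport hx, (sub_pos.mpr hp1).ne']
  have hcoord : ∀ x : Fin n → ℝ, fderiv ℝ (fun x : Fin n → ℝ ↦ x e) x (Pi.single e 1) = 1 := by
    intro x
    rw [(hasFDerivAt_apply e x).fderiv]
    simp
  have hcc : Continuous fun x : Fin n → ℝ ↦ x e := continuous_apply e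
  have hparts : ∫ x, g x = -∫ x, x e * fderiv ℝ g x (Pi.single e 1) := by
    have h := integral_mul_fderiv_eq_neg_fderiv_mul_of_integrable
      (μ := (volume : Measure (Fin n → ℝ))) (f := fun x : Fin n → ℝ ↦ x e) (g := g)
      (v := Pi.single e 1)
      (by simp_rw [hcoord, one_mul]
          exact hgC.continuous.integrable_of_hasCompactSupport hgs)
      ((hcc.mul hg'c).integrable_of_hasCompactSupport hg's.mul_left)
      ((hcc.mul hgC.continuous).integrable_of_hasCompactSupport hgs.mul_left)
      (fun x _ ↦ (hasFDerivAt_apply e x).differentiableAt)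
      (fun x _ ↦ hgC.differentiable one_ne_zero x)
    simp_rw [hcoord, one_mul] at h
    rw [h, neg_neg]
  have hpt : ∀ x, -(x e * fderiv ℝ g x (Pi.single e 1))
      ≤ R * p * (G x * ‖f x‖ ^ (p - 1)) := by
    intro x
    by_cases hx : x ∈ Ω
    · have horth : ⟪f x, A e x (f x)⟫ = 0 := by
        have h := hA e x hx (f x) (f x)
        rw [real_inner_comm] at h
        linarith
      have h1 := abs_fderiv_norm_rpow_le_of_inner_eq_zero hdiff hp1 x (Pi.single e 1) _ horth
      have h2 : |x e| ≤ R := (norm_le_pi_norm x e).trans (hR x hx)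
      calc -(x e * fderiv ℝ g x (Pi.single e 1))
          ≤ |x e| * |fderiv ℝ g x (Pi.single e 1)| := by
            rw [← abs_mul]
            exact neg_le_abs _
        _ ≤ R * (p * (G x * ‖f x‖ ^ (p - 1))) := by
            refine mul_le_mul h2 (h1.trans ?_) (abs_nonneg _) hR0.le
            gcongr
            exact hDG e x
        _ = _ := by ring
    · have h1 : fderiv ℝ g x = 0 := by
        rw [hg, hdiff.fderiv_norm_rpow hp1]
        simp [hzero x hx]
      have := hG0 x
      rw [h1]
      simp only [zero_apply, mul_zero, neg_zero]
      positivity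
  have hle : ∫ x, g x ≤ R * p * ∫ x, G x * ‖f x‖ ^ (p - 1) := by
    rw [hparts, ← integral_neg, ← integral_const_mul]
    exact integral_mono
      ((hcc.mul hg'c).integrable_of_hasCompactSupport hg's.mul_left).neg
      (((hGc.mul hwc).integrable_of_hasCompactSupport hws.mul_left).const_mul _) hpt
  have hpq := Real.HolderConjugate.conjExponent hp1
  have hH := integral_mul_le_Lp_mul_Lq_of_nonneg (μ := (volume : Measure (Fin n → ℝ))) hpq
    (f := G) (g := fun x ↦ ‖f x‖ ^ (p - 1)) (.of_forall hG0)
    (.of_forall fun x ↦ by positivity)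
    (hGc.memLp_of_hasCompactSupport hGs) (hwc.memLp_of_hasCompactSupport hws)
  have hq : ∀ x, (‖f x‖ ^ (p - 1)) ^ p.conjExponent = g x := by
    intro x
    rw [hg, ← Real.rpow_mul (norm_nonneg _), Real.conjExponent,
      mul_div_cancel₀ _ (sub_pos.mpr hp1).ne']
  simp_rw [hq] at hH
  have hI0 : 0 ≤ ∫ x, g x := integral_nonneg fun x ↦ by positivity
  have hJ0 : 0 ≤ ∫ x, G x ^ p := integral_nonneg fun x ↦ by
    have := hG0 x
    positivity
  rcases hI0.eq_or_lt with h0 | hpos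
  · rw [← h0, Real.zero_rpow (by positivity)]
    positivity
  · have hsplit : (∫ x, g x) ^ (1 / p) * (∫ x, g x) ^ (1 / p.conjExponent) = ∫ x, g x := by
      rw [← Real.rpow_add hpos]
      have : 1 / p + 1 / p.conjExponent = 1 := by
        simpa [one_div] using hpq.inv_add_inv_eq_one
      rw [this, Real.rpow_one]
    refine le_of_mul_le_mul_right ?_ (Real.rpow_pos_of_pos hpos (1 / p.conjExponent))
    calc _ = ∫ x, g x := hsplit
      _ ≤ R * p * ∫ x, G x * ‖f x‖ ^ (p - 1) := hle
      _ ≤ R * p * ((∫ x, G x ^ p) ^ (1 / p) * (∫ x, g x) ^ (1 / p.conjExponent)) := by gcongr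
      _ = _ := by ring
end

section
/- Let a < j < k < i < c < d < b be real numbers and let ψ : (a,b)³ → ℝ be smooth with support contained in (c,d)³. Then there exists a smooth function h : (a,b)³ → ℝ such that: (1) h = ψ on [c,d]³; (2) the support of h is contained in (j,d)³; (3) ∫_j^d h(x,s,z) ds = 0 for every fixed x, z; (4) h(x,y,z) = 0 whenever (x,z) ∉ (c,d)²; and (5) h(x,y,z) = 0 whenever y ∈ (i,c). -/
/-!
The witness is `h(x,y,z) = ψ(x,y,z) - (∫ ψ(x,s,z) ds) · η(y)`, where `η` is a smooth bump of total
integral `1` supported in `(k,i)`. Subtracting the bump cancels the integral along each `y`-line, and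
since `η` vanishes on `(i,∞)` it does not disturb `ψ` on `[c,d]³`.

Two points need care. Smoothness of the parametric integral `(x,z) ↦ ∫ ψ(x,s,z) ds` is obtained in
`contDiff_integral_middle` by viewing it as the convolution of `ψ(x,·,z)` with the constant `1`,
evaluated at `0`. The support of `h` is contained in `tsupport ψ ∪ π⁻¹(π(tsupport ψ)) ∩ {y ∈ supp η}`
with `π(x,y,z) = (x,z)`; this set is closed because `tsupport ψ` is compact.
-/

open Set MeasureTheory

/-- A smooth function whose support is bounded in the middle variable can be integrated out in that
variable, and the result is smooth. -/
lemma contDiff_integral_middle {c d : ℝ} {ψ : ℝ × ℝ × ℝ → ℝ} (hψ : ContDiff ℝ (⊤ : ℕ∞) ψ)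
    (h0 : ∀ x y z, y ∉ Icc c d → ψ (x, y, z) = 0) :
    ContDiff ℝ (⊤ : ℕ∞) (fun p : ℝ × ℝ => ∫ s, ψ (p.1, s, p.2)) := by
  have key := contDiffOn_convolution_left_with_param_comp (μ := (volume : Measure ℝ))
    (n := (⊤ : ℕ∞)) (ContinuousLinearMap.mul ℝ ℝ) (s := (univ : Set (ℝ × ℝ)))
    (v := fun _ => (0 : ℝ)) contDiffOn_const (f := fun _ : ℝ => (1 : ℝ))
    (g := fun (p : ℝ × ℝ) (s : ℝ) => ψ (p.1, s, p.2)) isOpen_univ (isCompact_Icc (a := c) (b := d))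
    (fun p x _ hx => h0 _ _ _ hx) (locallyIntegrable_const 1)
    (by
      apply ContDiff.contDiffOn
      change ContDiff ℝ _ (fun q : (ℝ × ℝ) × ℝ => ψ (q.1.1, q.2, q.1.2))
      fun_prop)
  simpa [convolution, contDiffOn_univ] using key


/-- **the auxiliary cutoff function `h`.** Let `a < j < k < i < c < d < b` and
let `ψ : (a,b)³ → ℝ` be smooth with support contained in `(c,d)³`.  Then there is a smooth
`h : (a,b)³ → ℝ` such that (1) `h = ψ` on `[c,d]³`; (2) `supp h ⊆ (j,d)³`;
(3) `∫_j^d h(x,s,z) ds = 0` for all fixed `x, z`; (4) `h(x,y,z) = 0` whenever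
`(x,z) ∉ (c,d)²`; and (5) `h(x,y,z) = 0` whenever `y ∈ (i,c)`.
(Functions are represented as smooth functions on all of `ℝ³`, which is equivalent via
extension by zero since the supports are compactly contained in the cubes.) -/
theorem exists_cutoff_h
    (a b c d i j k : ℝ)
    (haj : a < j) (hjk : j < k) (hki : k < i) (hic : i < c) (hcd : c < d) (hdb : d < b)
    (ψ : ℝ × ℝ × ℝ → ℝ)
    (hψ : ContDiff ℝ (⊤ : ℕ∞) ψ)
    (hψsupp : tsupport ψ ⊆ Set.Ioo c d ×ˢ Set.Ioo c d ×ˢ Set.Ioo c d) :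
    ∃ h : ℝ × ℝ × ℝ → ℝ,
      ContDiff ℝ (⊤ : ℕ∞) h ∧
      (∀ x y z : ℝ, x ∈ Set.Icc c d → y ∈ Set.Icc c d → z ∈ Set.Icc c d →
        h (x, y, z) = ψ (x, y, z)) ∧
      tsupport h ⊆ Set.Ioo j d ×ˢ Set.Ioo j d ×ˢ Set.Ioo j d ∧
      (∀ x z : ℝ, (∫ s in j..d, h (x, s, z)) = 0) ∧
      (∀ x y z : ℝ, (x, z) ∉ Set.Ioo c d ×ˢ Set.Ioo c d → h (x, y, z) = 0) ∧
      (∀ x y z : ℝ, y ∈ Set.Ioo i c → h (x, y, z) = 0) := by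
  have hz : ∀ x y z, ¬ (x ∈ Ioo c d ∧ y ∈ Ioo c d ∧ z ∈ Ioo c d) → ψ (x, y, z) = 0 := by
    intro x y z hn
    by_contra hne
    exact hn (by simpa using hψsupp (subset_tsupport _ hne))
  have hcpt : IsCompact (tsupport ψ) :=
    (isCompact_Icc.prod (isCompact_Icc.prod isCompact_Icc)).of_isClosed_subset
      (isClosed_tsupport ψ) (hψsupp.trans (prod_mono Ioo_subset_Icc_self
        (prod_mono Ioo_subset_Icc_self Ioo_subset_Icc_self)))
  obtain ⟨η, hηs, hη1, hηsupp⟩ : ∃ η : ℝ → ℝ, ContDiff ℝ (⊤ : ℕ∞) η ∧ ∫ s, η s = 1 ∧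
      tsupport η ⊆ Ioo k i := by
    let f : ContDiffBump ((k + i) / 2) := ⟨(i - k) / 8, (i - k) / 4, by linarith, by linarith⟩
    refine ⟨f.normed volume, f.contDiff_normed, f.integral_normed, ?_⟩
    rw [f.tsupport_normed_eq, Real.closedBall_eq_Icc]
    intro y hy
    simp only [f, mem_Icc] at hy
    constructor <;> linarith [hy.1, hy.2]
  have hη0 : ∀ y, y ∉ Ioo k i → η y = 0 := fun y hy =>
    image_eq_zero_of_notMem_tsupport fun h => hy (hηsupp h)
  set J : ℝ × ℝ → ℝ := fun p => ∫ s, ψ (p.1, s, p.2) with hJ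
  have hJs : ContDiff ℝ (⊤ : ℕ∞) J := contDiff_integral_middle (c := c) (d := d) hψ
    fun x y z hy => hz _ _ _ fun h => hy (Ioo_subset_Icc_self h.2.1)
  let π : ℝ × ℝ × ℝ → ℝ × ℝ := fun p => (p.1, p.2.2)
  have hπ : Continuous π := by fun_prop
  have hJ0 : ∀ p, p ∉ π '' tsupport ψ → J p = 0 := by
    intro p hp
    have : ∀ s, ψ (p.1, s, p.2) = 0 := fun s =>
      image_eq_zero_of_notMem_tsupport fun h => hp ⟨_, h, rfl⟩
    simp [hJ, this]
  have hJ1 : ∀ x z, (x, z) ∉ Ioo c d ×ˢ Ioo c d → J (x, z) = 0 := by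
    intro x z hn
    have : ∀ s, ψ (x, s, z) = 0 := fun s => hz _ _ _ fun h => hn ⟨h.1, h.2.2⟩
    simp [hJ, this]
  refine ⟨fun p => ψ p - J (π p) * η p.2.1, ?_, ?_, ?_, ?_, ?_, ?_⟩
  · exact hψ.sub ((hJs.comp (by fun_prop)).mul (hηs.comp (by fun_prop)))
  · intro x y z _ hy _
    simp [hη0 y fun h => by linarith [h.2, hy.1]]
  · have hclosed : IsClosed (tsupport ψ ∪ (π ⁻¹' (π '' tsupport ψ) ∩
        (fun p : ℝ × ℝ × ℝ => p.2.1) ⁻¹' tsupport η)) :=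
      (isClosed_tsupport ψ).union (((hcpt.image hπ).isClosed.preimage hπ).inter
        ((isClosed_tsupport η).preimage (by fun_prop)))
    refine (closure_minimal ?_ hclosed).trans ?_
    · intro p hp
      by_contra hn
      simp only [mem_union, mem_inter_iff, mem_preimage, not_or, not_and_or] at hn
      refine hp ?_
      rcases hn with ⟨h1, h2 | h2⟩
      · simp [image_eq_zero_of_notMem_tsupport h1, hJ0 _ h2]
      · simp [image_eq_zero_of_notMem_tsupport h1, image_eq_zero_of_notMem_tsupport h2]
    · have hjc : Ioo c d ⊆ Ioo j d := Ioo_subset_Ioo_left (by linarith)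
      rintro ⟨x, y, z⟩ (h | ⟨⟨⟨x₁, y₁, z₁⟩, h, he⟩, hy⟩)
      · exact prod_mono hjc (prod_mono hjc hjc) (hψsupp h)
      · obtain ⟨hx₁, -, hz₁⟩ := hψsupp h
        simp only [π, Prod.mk.injEq] at he
        obtain ⟨rfl, rfl⟩ := he
        have := hηsupp hy
        exact ⟨hjc hx₁, ⟨by linarith [this.1], by linarith [this.2]⟩, hjc hz₁⟩
  · intro x z
    have hψc : Continuous fun s => ψ (x, s, z) := hψ.continuous.comp (by fun_prop)
    have e1 : ∫ s in j..d, ψ (x, s, z) = J (x, z) :=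
      intervalIntegral.integral_eq_integral_of_support_subset fun s hs => by
        by_contra hn
        exact hs (hz _ _ _ fun h => hn ⟨by linarith [h.2.1.1], h.2.1.2.le⟩)
    have e2 : ∫ s in j..d, η s = 1 := by
      rw [← hη1]
      refine intervalIntegral.integral_eq_integral_of_support_subset fun s hs => ?_
      by_contra hn
      exact hs (hη0 _ fun h => hn ⟨by linarith [h.1], by linarith [h.2]⟩)
    change ∫ s in j..d, (ψ (x, s, z) - J (x, z) * η s) = 0
    rw [intervalIntegral.integral_sub (hψc.intervalIntegrable _ _)
      ((hηs.continuous.const_mul _).intervalIntegrable _ _),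
      intervalIntegral.integral_const_mul, e1, e2]
    ring
  · intro x y z hn
    simp [π, hJ1 x z hn, hz x y z fun h => hn ⟨h.1, h.2.2⟩]
  · intro x y z hy
    simp [hη0 y fun h => by linarith [h.2, hy.1], hz x y z fun h => by linarith [h.2.1.1, hy.2]]
end
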